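/- Let κ be an unfoldable cardinal. Then for every S ⊆ R(κ) and every ordinal α, the structure (E^wf_{(R(κ),∈,S)}, ≺_e) of well-founded end elementary extensions of (R(κ),∈,S) contains a chain of order type α. -/

import Mathlib

open FirstOrder Cardinal

/-- The language of set theory with one binary relation symbol (membership)
and one unary predicate symbol (for a distinguished subset). -/
def LSP : FirstOrder.Language where
  Functions := fun _ => Empty
  Relations := fun n =>
    match n with
    | 1 => Unit
    | 2 => Unit
    | _ => Empty

/-- A model of the language of set theory: a carrier together with a
membership relation and the interpretation of the distinguished predicate. -/
structure SetModel : Type 2 where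
  Carrier : Type 1
  mem : Carrier → Carrier → Prop
  pred : Carrier → Prop

/-- The first-order `LSP`-structure attached to a `SetModel`. -/
def SetModel.str (M : SetModel) : LSP.Structure M.Carrier where
  funMap := fun {_} f _ => Empty.elim f
  RelMap := fun {n} =>
    match n with
    | 1 => fun _ v => M.pred (v 0)
    | 2 => fun _ v => M.mem (v 0) (v 1)
    | 0 => fun r _ => Empty.elim r
    | (_ + 3) => fun r _ => Empty.elim r

/-- Satisfaction of a first-order formula with `n` free variables in a `SetModel`. -/
def SetModel.Realize (M : SetModel) {n : ℕ} (φ : LSP.Formula (Fin n))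
    (v : Fin n → M.Carrier) : Prop :=
  letI := M.str
  φ.Realize v

/-- `f : M → N` is an elementary map. -/
def IsElem (M N : SetModel) (f : M.Carrier → N.Carrier) : Prop :=
  ∀ (n : ℕ) (φ : LSP.Formula (Fin n)) (v : Fin n → M.Carrier),
    N.Realize φ (f ∘ v) ↔ M.Realize φ v

/-- `f : M → N` realizes `N` as a (proper) end elementary extension of `M`:
it is elementary, no element of `M` gains new members in `N`, and `N` properly
extends the image of `M`. -/
structure IsEEE (M N : SetModel) (f : M.Carrier → N.Carrier) : Prop where
  elementary : IsElem M N f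
  isEnd : ∀ (a : M.Carrier) (b : N.Carrier), N.mem b (f a) → ∃ b', f b' = b
  proper : ¬ Function.Surjective f

/-- `N` is a (proper) end elementary extension of `M`. -/
def EEE (M N : SetModel) : Prop := ∃ f, IsEEE M N f

/-- Isomorphism of set models. -/
def SMIso (M N : SetModel) : Prop :=
  ∃ e : M.Carrier ≃ N.Carrier,
    (∀ x y, M.mem x y ↔ N.mem (e x) (e y)) ∧ ∀ x, M.pred x ↔ N.pred (e x)

/-- The model `(A, ∈, S)` where `A, S` are collections of ZFC sets and `∈` is
genuine membership. -/
def ZModel (A S : Set ZFSet) : SetModel :=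
  ⟨A, fun x y => (x : ZFSet) ∈ (y : ZFSet), fun x => (x : ZFSet) ∈ S⟩

/-- `(A,∈,SA) ≺ₑ (B,∈,SB)`: the inclusion map is a proper end elementary
extension of concrete (well-founded) models. -/
def ZEEE (A SA B SB : Set ZFSet) : Prop :=
  ∃ h : A ⊆ B, IsEEE (ZModel A SA) (ZModel B SB) (Set.inclusion h)

/-- `R(o) = V_o`: the collection of ZFC sets of rank `< o`. -/
def Vrank (o : Ordinal.{0}) : Set ZFSet := {x | x.rank < o}

/-- `κ` is unfoldable: `κ` is inaccessible and for every `S ⊆ R(κ)` and every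
ordinal `α`, `(R(κ),∈,S)` has a well-founded (transitive) proper end elementary
extension of ordinal height at least `α`. -/
def IsUnfoldable (κ : Cardinal.{0}) : Prop :=
  κ.IsInaccessible ∧
    ∀ S : Set ZFSet, S ⊆ Vrank κ.ord → ∀ α : Ordinal.{0},
      ∃ (N : ZFSet) (T : Set ZFSet),
        N.IsTransitive ∧ ZEEE (Vrank κ.ord) S N.toSet T ∧ α ≤ N.rank

/-!
Code `S` and the map `x ↦ V_{e(rank x)}` into a single predicate `P` on `V_κ`, where `e` enumerates
levels with `(V_{e(o)}, ∈, S) ≺ (V_κ, ∈, S)`. That every set belongs to a coded level, that coded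
levels are transitive, comparable and increasing, and that each satisfies the Tarski–Vaught
condition, are first-order facts about `(V_κ, ∈, P)`, the last one formula by formula. They
therefore hold in a well-founded end elementary extension `N` of height at least `κ + α`. For
`β < α`, the level of least rank over a set of rank at least `κ + β` is a transitive elementary
submodel of `N`, with the decoded predicate, that includes `V_κ`. By minimality, and because a set
has a lower level than any set it belongs to, these levels strictly increase with `β`. Two
elementary submodels of `N`, one included in the other, form an elementary extension.
-/

theorem LSP.card_le_aleph0 : LSP.card ≤ ℵ₀ := by
  have hF : IsEmpty (Σ n, LSP.Functions n) := ⟨fun f => f.2.elim⟩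
  have hR : ∀ n, Countable (LSP.Relations n)
    | 0 => inferInstanceAs (Countable Empty)
    | 1 => inferInstanceAs (Countable Unit)
    | 2 => inferInstanceAs (Countable Unit)
    | _ + 3 => inferInstanceAs (Countable Empty)
  have : Countable LSP.Symbols := inferInstanceAs (Countable ((Σ n, _) ⊕ (Σ n, _)))
  exact Cardinal.mk_le_aleph0

theorem LSP.exists_eq_var {α : Type} (t : LSP.Term α) : ∃ k, t = .var k := by
  cases t with
  | var k => exact ⟨k, rfl⟩
  | func f _ => exact f.elim

namespace SetModel

variable (M : SetModel)

/-- Satisfaction in a `SetModel` of a formula with free variables indexed by `α` and `n`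
additional variables; `SetModel.Realize` is the case of a formula with `n = 0`. -/
def RealizeBounded {α : Type} {n : ℕ} (φ : LSP.BoundedFormula α n)
    (v : α → M.Carrier) (w : Fin n → M.Carrier) : Prop :=
  letI := M.str
  φ.Realize v w

/-- The Tarski–Vaught condition for a single formula: an instance of `φ` with parameters in `X`
that has a witness in `M` has one in `Y`. -/
def HasWitnesses {n : ℕ} (φ : LSP.BoundedFormula Empty (n + 1)) (X Y : Set M.Carrier) : Prop :=
  ∀ b : Fin n → M.Carrier, (∀ i, b i ∈ X) →
    (∃ a, M.RealizeBounded φ default (Fin.snoc (α := fun _ => M.Carrier) b a)) →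
    ∃ a ∈ Y, M.RealizeBounded φ default (Fin.snoc (α := fun _ => M.Carrier) b a)

/-- The unordered pair `{x, u}` exists in `M` and satisfies the predicate of `M`. -/
def CodesPair (x u : M.Carrier) : Prop :=
  ∃ p, M.pred p ∧ ∀ z, M.mem z p ↔ z = x ∨ z = u

/-- The predicate of `M`, read as a set of unordered pairs, singles out `u` among the sets that
have `x` as a member. Requiring `x ∈ u` is what recovers the order of the pair `{x, u}`. -/
def IsLevelOver (u x : M.Carrier) : Prop :=
  M.mem x u ∧ M.CodesPair x u

/-- `M` with its predicate replaced by `{x | {x, x} belongs to the predicate of M}`. -/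
abbrev decode : SetModel :=
  ⟨M.Carrier, M.mem, fun x => M.CodesPair x x⟩

/-- The levels coded in the predicate of `M` are transitive, comparable and increasing, every set
belongs to a level over it, and each level satisfies the Tarski–Vaught criterion for being an
elementary submodel of `M.decode`. -/
structure HasReflectingLevels : Prop where
  exists_level : ∀ x, ∃ u, M.IsLevelOver u x
  transitive : ∀ ⦃x u z w⦄, M.IsLevelOver u x → M.mem z u → M.mem w z → M.mem w u
  trichotomous : ∀ ⦃x y u w⦄, M.IsLevelOver u x → M.IsLevelOver w y →
    M.mem u w ∨ u = w ∨ M.mem w u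
  mono : ∀ ⦃x y u w⦄, M.IsLevelOver u x → M.IsLevelOver w y → M.mem x y → M.mem u w
  hasWitnesses : ∀ ⦃n⦄ (φ : LSP.BoundedFormula Empty (n + 1)) ⦃x u⦄, M.IsLevelOver u x →
    M.decode.HasWitnesses φ {a | M.mem a u} {a | M.mem a u}

end SetModel

/-- A relation on the elements of set models is uniformly definable if a single formula defines
it in every model. Such relations are preserved by elementary maps. -/
def UniformlyDefinable {ι : Type} (R : ∀ M : SetModel, (ι → M.Carrier) → Prop) : Prop :=
  ∃ φ : LSP.Formula ι, ∀ M v, M.RealizeBounded φ v default ↔ R M v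

namespace UniformlyDefinable

variable {ι β : Type} {R R' : ∀ M : SetModel, (ι → M.Carrier) → Prop}

theorem congr (h : UniformlyDefinable R) (hR : ∀ M v, R M v ↔ R' M v) : UniformlyDefinable R' :=
  let ⟨φ, hφ⟩ := h
  ⟨φ, fun M v => (hφ M v).trans (hR M v)⟩

theorem falsum : UniformlyDefinable (ι := ι) fun _ _ => False :=
  ⟨⊥, fun _ _ => Iff.rfl⟩

theorem imp (h : UniformlyDefinable R) (h' : UniformlyDefinable R') :
    UniformlyDefinable fun M v => R M v → R' M v :=
  let ⟨φ, hφ⟩ := h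
  let ⟨ψ, hψ⟩ := h'
  ⟨φ.imp ψ, fun M v => imp_congr (hφ M v) (hψ M v)⟩

theorem not (h : UniformlyDefinable R) : UniformlyDefinable fun M v => ¬ R M v :=
  h.imp falsum

theorem or (h : UniformlyDefinable R) (h' : UniformlyDefinable R') :
    UniformlyDefinable fun M v => R M v ∨ R' M v :=
  (h.not.imp h').congr fun _ _ => or_iff_not_imp_left.symm

theorem and (h : UniformlyDefinable R) (h' : UniformlyDefinable R') :
    UniformlyDefinable fun M v => R M v ∧ R' M v :=
  (h.imp h'.not).not.congr fun _ _ => by tauto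

theorem iff (h : UniformlyDefinable R) (h' : UniformlyDefinable R') :
    UniformlyDefinable fun M v => R M v ↔ R' M v :=
  ((h.imp h').and (h'.imp h)).congr fun _ _ => iff_def.symm

theorem iInf [Finite β] {R : β → ∀ M : SetModel, (ι → M.Carrier) → Prop}
    (h : ∀ b, UniformlyDefinable (R b)) : UniformlyDefinable fun M v => ∀ b, R b M v := by
  choose φ hφ using h
  refine ⟨Language.Formula.iInf φ, fun M v => ?_⟩
  let _ := M.str
  exact Language.Formula.realize_iInf.trans (forall_congr' fun b => hφ b M v)

theorem iAlls [Finite β] {R : ∀ M : SetModel, (ι → M.Carrier) → (β → M.Carrier) → Prop}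
    (h : UniformlyDefinable (ι := ι ⊕ β)
      fun M v => R M (fun i => v (.inl i)) (fun b => v (.inr b))) :
    UniformlyDefinable fun M v => ∀ w, R M v w := by
  obtain ⟨φ, hφ⟩ := h
  refine ⟨φ.iAlls β, fun M v => ?_⟩
  let _ := M.str
  exact Language.Formula.realize_iAlls.trans (forall_congr' fun w => hφ M (Sum.elim v w))

theorem all {R : ∀ M : SetModel, (ι → M.Carrier) → M.Carrier → Prop}
    (h : UniformlyDefinable (ι := ι ⊕ Unit) fun M v => R M (fun i => v (.inl i)) (v (.inr ()))) :
    UniformlyDefinable fun M v => ∀ a, R M v a :=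
  (iAlls (R := fun M v w => R M v (w ())) h).congr fun _ _ =>
    ⟨fun h a => h fun _ => a, fun h w => h (w ())⟩

theorem ex {R : ∀ M : SetModel, (ι → M.Carrier) → M.Carrier → Prop}
    (h : UniformlyDefinable (ι := ι ⊕ Unit) fun M v => R M (fun i => v (.inl i)) (v (.inr ()))) :
    UniformlyDefinable fun M v => ∃ a, R M v a :=
  (all (R := fun M v a => ¬ R M v a) h.not).not.congr fun _ _ => not_forall_not

theorem mem (i j : ι) : UniformlyDefinable fun M v => M.mem (v i) (v j) :=
  ⟨Language.Relations.formula₂ (L := LSP) (show LSP.Relations 2 from ()) (.var i) (.var j),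
    fun M _ => letI := M.str; Language.Formula.realize_rel₂⟩

theorem pred (i : ι) : UniformlyDefinable fun M v => M.pred (v i) :=
  ⟨Language.Relations.formula₁ (L := LSP) (show LSP.Relations 1 from ()) (.var i),
    fun M _ => letI := M.str; Language.Formula.realize_rel₁⟩

theorem eq (i j : ι) : UniformlyDefinable fun _ v => v i = v j :=
  ⟨Language.Term.equal (L := LSP) (.var i) (.var j),
    fun M _ => letI := M.str; Language.Formula.realize_equal⟩

theorem codesPair (i j : ι) : UniformlyDefinable fun M v => M.CodesPair (v i) (v j) :=
  .ex (.and (.pred _) (.all (.iff (.mem _ _) (.or (.eq _ _) (.eq _ _)))))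

theorem isLevelOver (i j : ι) : UniformlyDefinable fun M v => M.IsLevelOver (v i) (v j) :=
  .and (.mem _ _) (.codesPair _ _)

theorem decode_realizeBounded_rel {α : Type} {n : ℕ} (f : α → ι) (g : Fin n → ι) :
    ∀ {l : ℕ} (r : LSP.Relations l) (ts : Fin l → LSP.Term (α ⊕ Fin n)),
      UniformlyDefinable fun M v => M.decode.RealizeBounded
        (Language.BoundedFormula.rel r ts) (v ∘ f) (v ∘ g)
  | 1, _, ts => by
    obtain ⟨k, hk⟩ := LSP.exists_eq_var (ts 0)
    refine (codesPair (Sum.elim f g k) (Sum.elim f g k)).congr fun M v => ?_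
    change _ ↔ M.decode.pred _
    dsimp only
    rw [hk]
    cases k <;> rfl
  | 2, _, ts => by
    obtain ⟨k, hk⟩ := LSP.exists_eq_var (ts 0)
    obtain ⟨l, hl⟩ := LSP.exists_eq_var (ts 1)
    refine (mem (Sum.elim f g k) (Sum.elim f g l)).congr fun M v => ?_
    change _ ↔ M.decode.mem _ _
    dsimp only
    rw [hk, hl]
    cases k <;> cases l <;> rfl
  | 0, r, _ => r.elim
  | _ + 3, r, _ => r.elim

theorem decode_realizeBounded {α : Type} {n : ℕ} (φ : LSP.BoundedFormula α n) :
    ∀ {ι : Type} (f : α → ι) (g : Fin n → ι),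
      UniformlyDefinable fun M v => M.decode.RealizeBounded φ (v ∘ f) (v ∘ g) := by
  induction φ with
  | falsum => exact fun _ _ => falsum
  | equal t₁ t₂ =>
    intro ι f g
    obtain ⟨k, rfl⟩ := LSP.exists_eq_var t₁
    obtain ⟨l, rfl⟩ := LSP.exists_eq_var t₂
    refine (eq (Sum.elim f g k) (Sum.elim f g l)).congr fun M v => ?_
    cases k <;> cases l <;> rfl
  | rel r ts => exact fun f g => decode_realizeBounded_rel f g r ts
  | imp φ ψ ihφ ihψ => exact fun f g => (ihφ f g).imp (ihψ f g)
  | all φ ih =>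
    intro ι f g
    refine all (R := fun M v a => M.decode.RealizeBounded φ (v ∘ f)
      (Fin.snoc (α := fun _ => M.Carrier) (v ∘ g) a)) ?_
    refine (ih (Sum.inl ∘ f) (Fin.snoc (α := fun _ => ι ⊕ Unit) (Sum.inl ∘ g) (.inr ()))).congr
      fun M v => ?_
    rw [Fin.comp_snoc]
    rfl

theorem decode_realizeBounded_snoc {n : ℕ} (φ : LSP.BoundedFormula Empty (n + 1))
    (g : Fin n → ι) (a : ι) :
    UniformlyDefinable fun M v => M.decode.RealizeBounded φ default
      (Fin.snoc (α := fun _ => M.Carrier) (fun i => v (g i)) (v a)) := by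
  refine (decode_realizeBounded φ Empty.elim (Fin.snoc (α := fun _ => ι) g a)).congr
    fun M v => ?_
  rw [Fin.comp_snoc, Subsingleton.elim (v ∘ Empty.elim) default]
  rfl

theorem decode_hasWitnesses {n : ℕ} (φ : LSP.BoundedFormula Empty (n + 1)) (i : ι) :
    UniformlyDefinable fun M v =>
      M.decode.HasWitnesses φ {a | M.mem a (v i)} {a | M.mem a (v i)} :=
  iAlls (.imp (.iInf fun _ => .mem _ _) (.imp (.ex (decode_realizeBounded_snoc φ _ _))
    (.ex (.and (.mem _ _) (decode_realizeBounded_snoc φ _ _)))))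

theorem iff_of_isElem {M N : SetModel} {f : M.Carrier → N.Carrier} {n : ℕ}
    {R : ∀ M : SetModel, (Fin n → M.Carrier) → Prop} (h : UniformlyDefinable R)
    (hf : IsElem M N f) (v : Fin n → M.Carrier) : R N (f ∘ v) ↔ R M v := by
  obtain ⟨φ, hφ⟩ := h
  exact (hφ N _).symm.trans ((hf n φ v).trans (hφ M v))

theorem of_isElem {M N : SetModel} {f : M.Carrier → N.Carrier} {R : SetModel → Prop}
    (hf : IsElem M N f) (hM : R M) (h : UniformlyDefinable (ι := Fin 0) fun M _ => R M) : R N :=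
  (h.iff_of_isElem hf finZeroElim).2 hM

end UniformlyDefinable

namespace IsElem

variable {L M N : SetModel} {f : M.Carrier → N.Carrier}

theorem of_comp {g : L.Carrier → M.Carrier} (hf : IsElem M N f) (hfg : IsElem L N (f ∘ g)) :
    IsElem L M g :=
  fun n φ v => (hf n φ (g ∘ v)).symm.trans (hfg n φ v)

theorem isLevelOver_iff (hf : IsElem M N f) {u x : M.Carrier} :
    N.IsLevelOver (f u) (f x) ↔ M.IsLevelOver u x :=
  (UniformlyDefinable.isLevelOver (0 : Fin 2) 1).iff_of_isElem hf ![u, x]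

theorem decode (hf : IsElem M N f) : IsElem M.decode N.decode f := by
  intro n φ v
  have hdef : UniformlyDefinable fun M (v : Fin n → M.Carrier) => M.decode.Realize φ v :=
    (UniformlyDefinable.decode_realizeBounded φ id finZeroElim).congr fun M v => by
      rw [Subsingleton.elim (v ∘ finZeroElim) default]
      rfl
  exact hdef.iff_of_isElem hf v

end IsElem

theorem SetModel.HasReflectingLevels.of_isElem {M N : SetModel} {f : M.Carrier → N.Carrier}
    (hM : M.HasReflectingLevels) (hf : IsElem M N f) : N.HasReflectingLevels where
  exists_level := UniformlyDefinable.of_isElem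
    (R := fun M => ∀ x, ∃ u, M.IsLevelOver u x) hf hM.exists_level
    (.all (.ex (.isLevelOver _ _)))
  transitive := UniformlyDefinable.of_isElem
    (R := fun M => ∀ ⦃x u z w⦄, M.IsLevelOver u x → M.mem z u → M.mem w z → M.mem w u)
    hf hM.transitive
    (.all (.all (.all (.all (.imp (.isLevelOver _ _)
      (.imp (.mem _ _) (.imp (.mem _ _) (.mem _ _))))))))
  trichotomous := UniformlyDefinable.of_isElem
    (R := fun M => ∀ ⦃x y u w⦄, M.IsLevelOver u x → M.IsLevelOver w y →
      M.mem u w ∨ u = w ∨ M.mem w u) hf hM.trichotomous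
    (.all (.all (.all (.all (.imp (.isLevelOver _ _)
      (.imp (.isLevelOver _ _) (.or (.mem _ _) (.or (.eq _ _) (.mem _ _)))))))))
  mono := UniformlyDefinable.of_isElem
    (R := fun M => ∀ ⦃x y u w⦄, M.IsLevelOver u x → M.IsLevelOver w y →
      M.mem x y → M.mem u w) hf hM.mono
    (.all (.all (.all (.all (.imp (.isLevelOver _ _)
      (.imp (.isLevelOver _ _) (.imp (.mem _ _) (.mem _ _))))))))
  hasWitnesses _ φ := UniformlyDefinable.of_isElem
    (R := fun M => ∀ ⦃x u⦄, M.IsLevelOver u x →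
      M.decode.HasWitnesses φ {a | M.mem a u} {a | M.mem a u}) hf (hM.hasWitnesses φ)
    (.all (.all (.imp (.isLevelOver _ _) (.decode_hasWitnesses φ _))))

/-- The set of `x ∈ A` with `{x, x}` in the predicate of `(A, ∈, T)`, so that
`(A, ∈, decodedSet A T)` is the decoded model of `(A, ∈, T)`. -/
def decodedSet (A T : Set ZFSet) : Set ZFSet :=
  {x | ∃ h : x ∈ A, (ZModel A T).CodesPair ⟨x, h⟩ ⟨x, h⟩}

section ConcreteModels

variable {A B T T' : Set ZFSet}

theorem codesPair_self_iff_mem_decodedSet (x : A) :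
    (ZModel A T).CodesPair x x ↔ x.1 ∈ decodedSet A T :=
  ⟨fun h => ⟨x.2, h⟩, fun ⟨_, h⟩ => h⟩

theorem pred_decode_eq :
    (ZModel A T).decode.pred = (ZModel A (decodedSet A T)).pred :=
  funext fun x => propext (codesPair_self_iff_mem_decodedSet x)

theorem SetModel.HasWitnesses.of_pred_eq {C : Type 1} {m : C → C → Prop} {P P' : C → Prop}
    {n : ℕ} {φ : LSP.BoundedFormula Empty (n + 1)} {X Y : Set C} (h : P = P')
    (hw : SetModel.HasWitnesses ⟨C, m, P⟩ φ X Y) : SetModel.HasWitnesses ⟨C, m, P'⟩ φ X Y :=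
  h ▸ hw

theorem IsElem.of_decode {f : A → B} (hf : IsElem (ZModel A T).decode (ZModel B T').decode f) :
    IsElem (ZModel A (decodedSet A T)) (ZModel B (decodedSet B T')) f := by
  change IsElem ⟨A, _, (ZModel A T).decode.pred⟩ ⟨B, _, (ZModel B T').decode.pred⟩ f at hf
  rw [pred_decode_eq, pred_decode_eq] at hf
  exact hf

theorem ZModel.isElem_inclusion_of_hasWitnesses (h : A ⊆ B)
    (hw : ∀ (n : ℕ) (φ : LSP.BoundedFormula Empty (n + 1)),
      (ZModel B T).HasWitnesses φ {a | a.1 ∈ A} {a | a.1 ∈ A}) :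
    IsElem (ZModel A T) (ZModel B T) (Set.inclusion h) := by
  let _ := (ZModel A T).str
  let _ := (ZModel B T).str
  let e : (ZModel A T).Carrier ↪[LSP] (ZModel B T).Carrier :=
    { toFun := Set.inclusion h
      inj' := Set.inclusion_injective h
      map_fun' := fun f _ => f.elim
      map_rel' := fun {n} r _ =>
        match n, r with
        | 1, _ => Iff.rfl
        | 2, _ => Iff.rfl
        | 0, r => r.elim
        | _ + 3, r => r.elim }
  intro n φ v
  refine e.isElementary_of_exists (fun n φ b a ha => ?_) φ v
  obtain ⟨c, hcA, hc⟩ := hw n φ (e ∘ b) (fun i => (b i).2) ⟨a, ha⟩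
  exact ⟨⟨c.1, hcA⟩, hc⟩

theorem ZEEE.of_isElem (h : A ⊂ B) (hA : ∀ a ∈ A, ∀ b ∈ a, b ∈ A)
    (he : IsElem (ZModel A T) (ZModel B T') (Set.inclusion h.subset)) : ZEEE A T B T' :=
  ⟨h.subset, he, fun a b hb => ⟨⟨b.1, hA a.1 a.2 b.1 hb⟩, rfl⟩, fun hs =>
    h.ne (Set.eq_of_inclusion_surjective hs)⟩

end ConcreteModels

theorem mem_Vrank_of_mem {o : Ordinal.{0}} {x y : ZFSet} (hx : x ∈ Vrank o) (hy : y ∈ x) :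
    y ∈ Vrank o :=
  (ZFSet.rank_lt_of_mem hy).trans hx

namespace SetModel.HasReflectingLevels

variable {N : ZFSet} {T : Set ZFSet}

theorem isTransitive (hL : (ZModel N.toSet T).HasReflectingLevels) (hN : N.IsTransitive)
    {u x : N.toSet} (hu : (ZModel N.toSet T).IsLevelOver u x) : u.1.IsTransitive := by
  intro z hz w hw
  have hzN : z ∈ N := hN.mem_trans hz u.2
  exact hL.transitive hu (z := ⟨z, hzN⟩) (w := ⟨w, hN.mem_trans hw hzN⟩) hz hw

theorem level_mem_of_rank_lt (hL : (ZModel N.toSet T).HasReflectingLevels)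
    {u x w y : N.toSet} (hu : (ZModel N.toSet T).IsLevelOver u x)
    (hw : (ZModel N.toSet T).IsLevelOver w y) (h : u.1.rank < w.1.rank) : u.1 ∈ w.1 := by
  rcases hL.trichotomous hu hw with huw | rfl | hwu
  · exact huw
  · exact absurd h (lt_irrefl _)
  · exact absurd (ZFSet.rank_lt_of_mem hwu) h.not_gt

theorem isElem_inclusion (hL : (ZModel N.toSet T).HasReflectingLevels)
    {u x : N.toSet} (hu : (ZModel N.toSet T).IsLevelOver u x) (hs : u.1.toSet ⊆ N.toSet) :
    IsElem (ZModel u.1.toSet (decodedSet N.toSet T)) (ZModel N.toSet (decodedSet N.toSet T))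
      (Set.inclusion hs) :=
  ZModel.isElem_inclusion_of_hasWitnesses _ fun _ φ =>
    (hL.hasWitnesses φ hu).of_pred_eq pred_decode_eq

theorem Vrank_ssubset_level (hL : (ZModel N.toSet T).HasReflectingLevels)
    {o : Ordinal.{0}} {S : Set ZFSet} {h : Vrank o ⊆ N.toSet}
    (hV : (ZModel (Vrank o) S).HasReflectingLevels)
    (he : IsElem (ZModel (Vrank o) S) (ZModel N.toSet T) (Set.inclusion h)) {u x : N.toSet}
    (hu : (ZModel N.toSet T).IsLevelOver u x) (ht : u.1.IsTransitive) (hx : o ≤ x.1.rank) :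
    Vrank o ⊂ u.1.toSet := by
  refine Set.ssubset_iff_exists.2 ⟨fun a ha => ?_, x, hu.1, hx.not_gt⟩
  obtain ⟨w, hw⟩ := hV.exists_level ⟨a, ha⟩
  have hxu : x.1.rank < u.1.rank := ZFSet.rank_lt_of_mem hu.1
  have hwu : w.1 ∈ u.1 :=
    hL.level_mem_of_rank_lt (he.isLevelOver_iff.2 hw) hu (w.2.trans (hx.trans_lt hxu))
  exact ht.mem_trans hw.1 hwu

theorem exists_level_chain (hL : (ZModel N.toSet T).HasReflectingLevels)
    (hN : N.IsTransitive) {θ α : Ordinal.{0}} (hα : θ + α ≤ N.rank) :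
    ∃ U : Set.Iio α → N.toSet,
      (∀ β, ∃ x : N.toSet, (ZModel N.toSet T).IsLevelOver (U β) x ∧ θ ≤ x.1.rank) ∧
      ∀ β γ, β < γ → (U β).1 ∈ (U γ).1 := by
  have hmin (β : Set.Iio α) : ∃ u : N.toSet, MinimalFor (fun u : N.toSet =>
      ∃ x : N.toSet, (ZModel N.toSet T).IsLevelOver u x ∧ θ + β ≤ x.1.rank) (·.1.rank) u := by
    obtain ⟨x, hx, hβx⟩ := ZFSet.lt_rank_iff.1 ((add_lt_add_right β.2 θ).trans_le hα)
    obtain ⟨u, hu⟩ := hL.exists_level ⟨x, hx⟩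
    exact exists_minimalFor_of_wellFoundedLT _ _ ⟨u, _, hu, hβx⟩
  choose U hU using hmin
  refine ⟨U, fun β => ?_, fun β γ hβγ => ?_⟩
  · obtain ⟨x, hx, hβx⟩ := (hU β).prop
    exact ⟨x, hx, le_self_add.trans hβx⟩
  · obtain ⟨x, hx, -⟩ := (hU β).prop
    obtain ⟨y, hy, hγy⟩ := (hU γ).prop
    have hβy : θ + β < y.1.rank := (add_lt_add_right (Subtype.coe_lt_coe.2 hβγ) θ).trans_le hγy
    obtain ⟨z, hzy, hβz⟩ := ZFSet.lt_rank_iff.1 hβy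
    have hz : z ∈ N := hN.mem_trans hzy y.2
    obtain ⟨w, hw⟩ := hL.exists_level ⟨z, hz⟩
    have hwU : w.1 ∈ (U γ).1 := hL.mono hw hy hzy
    have hUw : (U β).1.rank ≤ w.1.rank :=
      le_of_not_gt fun h => (hU β).not_prop_of_lt h ⟨_, hw, hβz⟩
    exact hL.level_mem_of_rank_lt hx hy (hUw.trans_lt (ZFSet.rank_lt_of_mem hwU))

end SetModel.HasReflectingLevels

section Inaccessible

universe v

variable {κ : Cardinal.{0}}

theorem exists_forall_lt_ord {β : Type v} (hκ : κ.IsRegular) (hβ : #β < Cardinal.lift.{v} κ)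
    (f : β → Ordinal.{0}) (hf : ∀ i, f i < κ.ord) : ∃ b < κ.ord, ∀ i, f i < b := by
  refine ⟨⨆ i, Order.succ (f i), Ordinal.lift_iSup_lt_of_lt_cof ?_ fun i =>
    (Cardinal.isSuccLimit_ord hκ.aleph0_le).succ_lt (hf i), fun i => ?_⟩
  · rw [← Ordinal.lift_cof, hκ.cof_ord]
    simpa using hβ
  · refine (Order.lt_succ _).trans_le (le_ciSup (f := fun i => Order.succ (f i)) ⟨κ.ord, ?_⟩ i)
    rintro _ ⟨i, rfl⟩
    exact Order.succ_le_of_lt (hf i)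

theorem enumOrd_lt_ord (hκ : κ.IsRegular) {C : Set Ordinal.{0}}
    (hC : ∀ b < κ.ord, ∃ c ∈ C, b ≤ c ∧ c < κ.ord) {o : Ordinal.{0}} (ho : o < κ.ord) :
    Ordinal.enumOrd C o < κ.ord := by
  induction o using WellFoundedLT.induction with
  | ind o ih =>
    obtain ⟨b, hb, hob⟩ := exists_forall_lt_ord hκ (β := Set.Iio o)
      (by rwa [Cardinal.mk_Iio_ordinal, Cardinal.lift_lt, ← Cardinal.lt_ord])
      (fun i => Ordinal.enumOrd C i) fun i => ih i i.2 (i.2.trans ho)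
    obtain ⟨c, hcC, hbc, hc⟩ := hC b hb
    exact (Ordinal.enumOrd_le_of_forall_lt hcC fun i hi => (hob ⟨i, hi⟩).trans_le hbc).trans_lt hc

theorem mk_Vrank (o : Ordinal.{0}) : #(Vrank o) = Cardinal.lift.{1} (preBeth o) := by
  have hV : Vrank o = (ZFSet.vonNeumann o).toSet := Set.ext fun _ => ZFSet.mem_vonNeumann.symm
  rw [hV, ← ZFSet.card_vonNeumann]
  exact ZFSet.cardinalMk_coe_sort

theorem exists_superset_hasWitnesses {M : SetModel} (X : Set M.Carrier) (hM : ℵ₀ ≤ #M.Carrier) :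
    ∃ Y : Set M.Carrier, X ⊆ Y ∧ #Y = max ℵ₀ #X ∧
      ∀ (n : ℕ) (φ : LSP.BoundedFormula Empty (n + 1)), M.HasWitnesses φ Y Y := by
  let _ := M.str
  obtain ⟨E, hXE, hE⟩ := Language.exists_elementarySubstructure_card_eq LSP X (max ℵ₀ #X)
    (le_max_left _ _) (by simp) (by simpa using .inl LSP.card_le_aleph0)
    (by simpa using ⟨hM, Cardinal.mk_set_le X⟩)
  refine ⟨E, hXE, by simpa using hE, fun n φ b hb ⟨a, ha⟩ => ?_⟩
  let c : Fin n → E := fun i => ⟨b i, hb i⟩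
  have hex : φ.ex.Realize (E.subtype ∘ (default : Empty → E)) (E.subtype ∘ c) := by
    rw [Subsingleton.elim (E.subtype ∘ default) default]
    exact Language.BoundedFormula.realize_ex.2 ⟨a, ha⟩
  rw [E.subtype.map_boundedFormula, Language.BoundedFormula.realize_ex] at hex
  obtain ⟨d, hd⟩ := hex
  refine ⟨d, d.2, ?_⟩
  rw [← E.subtype.map_boundedFormula, Fin.comp_snoc,
    Subsingleton.elim (E.subtype ∘ default) default] at hd
  exact hd

/-- Every formula with parameters in `V_l` that has a witness in `(V_o, ∈, S)` has one in `V_m`.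
For `l = m` this says that `V_l` is an elementary submodel of `(V_o, ∈, S)`. -/
def HasWitnessesBelow (o : Ordinal.{0}) (S : Set ZFSet) (l m : Ordinal.{0}) : Prop :=
  ∀ ⦃n : ℕ⦄ (φ : LSP.BoundedFormula Empty (n + 1)),
    (ZModel (Vrank o) S).HasWitnesses φ {a | a.1 ∈ Vrank l} {a | a.1 ∈ Vrank m}

theorem exists_hasWitnessesBelow (hκ : κ.IsInaccessible) (S : Set ZFSet) {l : Ordinal.{0}}
    (hl : l < κ.ord) : ∃ l' < κ.ord, l ≤ l' ∧ HasWitnessesBelow κ.ord S l l' := by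
  have hcard : #(Vrank κ.ord) = Cardinal.lift.{1} κ := by rw [mk_Vrank, hκ.preBeth_ord]
  obtain ⟨Y, hlY, hY, hw⟩ := exists_superset_hasWitnesses (M := ZModel (Vrank κ.ord) S)
    {a | a.1 ∈ Vrank l} (by
      change ℵ₀ ≤ #(Vrank κ.ord)
      rw [hcard]
      simpa using hκ.aleph0_lt.le)
  have hX : #{a : Vrank κ.ord | a.1 ∈ Vrank l} ≤ Cardinal.lift.{1} (preBeth l) := by
    rw [← mk_Vrank]
    exact Cardinal.mk_preimage_of_injective Subtype.val (Vrank l) Subtype.val_injective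
  have hYκ : #Y < Cardinal.lift.{1} κ := by
    rw [hY]
    refine max_lt (by simpa using hκ.aleph0_lt) (hX.trans_lt ?_)
    rw [Cardinal.lift_lt]
    exact (Cardinal.preBeth_strictMono hl).trans_eq hκ.preBeth_ord
  obtain ⟨b, hb, hYb⟩ := exists_forall_lt_ord hκ.isRegular hYκ (·.1.1.rank) fun a => a.1.2
  refine ⟨max l b, max_lt hl hb, le_max_left _ _, fun n φ p hp hex => ?_⟩
  obtain ⟨a, haY, ha⟩ := hw n φ p (fun i => hlY (hp i)) hex
  exact ⟨a, (hYb ⟨a, haY⟩).trans_le (le_max_right _ _), ha⟩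

theorem exists_hasWitnessesBelow_self (hκ : κ.IsInaccessible) (S : Set ZFSet) {l : Ordinal.{0}}
    (hl : l < κ.ord) : ∃ l' < κ.ord, l ≤ l' ∧ HasWitnessesBelow κ.ord S l' l' := by
  choose! h hκ_lt hle hwit using fun l => exists_hasWitnessesBelow hκ S (l := l)
  have hlt (k : ℕ) : h^[k] l < κ.ord := by
    induction k with
    | zero => exact hl
    | succ k ih => exact Function.iterate_succ_apply' h k l ▸ hκ_lt _ ih
  have hmono : Monotone fun k => h^[k] l := monotone_nat_of_le_succ fun k =>
    (hle _ (hlt k)).trans_eq (Function.iterate_succ_apply' h k l).symm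
  refine ⟨Ordinal.nfp h l, Cardinal.nfp_lt_ord_of_isRegular hκ.isRegular hκ.aleph0_lt.ne'
    hκ_lt hl, Ordinal.le_nfp _ _, fun n φ b hb hex => ?_⟩
  choose k hk using fun i => Ordinal.lt_nfp_iff.1 (hb i)
  obtain ⟨a, ha, hφ⟩ := hwit _ (hlt (Finset.univ.sup k)) φ b
    (fun i => (hk i).trans_le (hmono (Finset.le_sup (Finset.mem_univ i)))) hex
  have hnfp : h (h^[Finset.univ.sup k] l) ≤ Ordinal.nfp h l :=
    (Function.iterate_succ_apply' h _ l).symm.trans_le (Ordinal.iterate_le_nfp h l _)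
  exact ⟨a, ha.out.trans_le hnfp, hφ⟩

theorem exists_strictMono_hasWitnessesBelow (hκ : κ.IsInaccessible) (S : Set ZFSet) :
    ∃ e : Ordinal.{0} → Ordinal.{0}, StrictMono e ∧ (∀ o, o < e o) ∧
      ∀ o < κ.ord, e o < κ.ord ∧ HasWitnessesBelow κ.ord S (e o) (e o) := by
  let C : Set Ordinal.{0} := {l | l < κ.ord → HasWitnessesBelow κ.ord S l l}
  have hC : ¬ BddAbove C := not_bddAbove_iff.2 fun b =>
    ⟨max κ.ord (Order.succ b), fun h => absurd h (le_max_left _ _).not_gt,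
      (Order.lt_succ b).trans_le (le_max_right _ _)⟩
  have hlt (o : Ordinal.{0}) (ho : o < κ.ord) : Ordinal.enumOrd C (Order.succ o) < κ.ord :=
    enumOrd_lt_ord hκ.isRegular (fun b hb =>
      let ⟨c, hc, hbc, hw⟩ := exists_hasWitnessesBelow_self hκ S hb
      ⟨c, fun _ => hw, hbc, hc⟩) ((Cardinal.isSuccLimit_ord hκ.aleph0_lt.le).succ_lt ho)
  exact ⟨fun o => Ordinal.enumOrd C (Order.succ o),
    (Ordinal.enumOrd_strictMono hC).comp Order.succ_strictMono,
    fun o => (Order.lt_succ o).trans_le (Ordinal.le_enumOrd_self hC),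
    fun o ho => ⟨hlt o ho, Ordinal.enumOrd_mem hC _ (hlt o ho)⟩⟩

end Inaccessible

section Coding

variable {A S T : Set ZFSet} {F : ZFSet → ZFSet}

/-- A single predicate coding `S` by the pairs `{x, x}` and the map `F` on `A` by the unordered
pairs `{x, F x}`; the two kinds of pairs, and the order of the latter, can be told apart when
`x ∈ F x`. -/
def levelCode (A S : Set ZFSet) (F : ZFSet → ZFSet) : Set ZFSet :=
  {p | (∃ x ∈ S, p = {x, x}) ∨ ∃ x ∈ A, p = {x, F x}}

theorem pair_eq_pair_iff {x y z w : ZFSet} :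
    ({x, y} : ZFSet) = {z, w} ↔ x = z ∧ y = w ∨ x = w ∧ y = z := by
  rw [← SetLike.coe_set_eq]
  simp [Set.pair_eq_pair_iff]

theorem pair_self_mem_levelCode_iff (hF : ∀ x, x ∈ F x) {x : ZFSet} :
    {x, x} ∈ levelCode A S F ↔ x ∈ S := by
  constructor
  · rintro (⟨y, hy, h⟩ | ⟨y, -, h⟩)
    · rw [ZFSet.pair_eq_singleton, ZFSet.singleton_eq_pair_iff] at h
      exact h.1 ▸ hy
    · rw [ZFSet.pair_eq_singleton, ZFSet.singleton_eq_pair_iff] at h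
      have hy : y = F y := h.1.symm.trans h.2
      exact absurd (hF y) (hy ▸ ZFSet.mem_irrefl y)
  · exact fun hx => .inl ⟨x, hx, rfl⟩

theorem pair_mem_levelCode_iff (hF : ∀ x, x ∈ F x) {x u : ZFSet} (hx : x ∈ A) (hxu : x ∈ u) :
    {x, u} ∈ levelCode A S F ↔ u = F x := by
  constructor
  · rintro (⟨y, -, h⟩ | ⟨y, -, h⟩)
    · rw [ZFSet.pair_eq_singleton, ZFSet.pair_eq_singleton_iff] at h
      exact absurd hxu (h.1.trans h.2.symm ▸ ZFSet.mem_irrefl x)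
    · obtain ⟨rfl, rfl⟩ | ⟨rfl, rfl⟩ := pair_eq_pair_iff.1 h
      · rfl
      · exact absurd hxu (ZFSet.mem_asymm (hF _))
  · rintro rfl
    exact .inr ⟨x, hx, rfl⟩

theorem codesPair_iff_pair_mem (hA : ∀ a ∈ A, ∀ b ∈ a, b ∈ A) (hT : T ⊆ A) (x u : A) :
    (ZModel A T).CodesPair x u ↔ {x.1, u.1} ∈ T := by
  constructor
  · rintro ⟨p, hp, hmem⟩
    have hpair : p.1 = {x.1, u.1} := by
      ext z
      rw [ZFSet.mem_pair]
      refine ⟨fun hz => ?_, ?_⟩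
      · exact ((hmem ⟨z, hA _ p.2 _ hz⟩).1 hz).imp (congrArg Subtype.val) (congrArg Subtype.val)
      · rintro (rfl | rfl)
        exacts [(hmem x).2 (.inl rfl), (hmem u).2 (.inr rfl)]
    exact hpair ▸ hp
  · intro h
    exact ⟨⟨_, hT h⟩, h, fun z =>
      ZFSet.mem_pair.trans (or_congr Subtype.ext_iff.symm Subtype.ext_iff.symm)⟩

theorem decodedSet_levelCode (hA : ∀ a ∈ A, ∀ b ∈ a, b ∈ A) (hF : ∀ x, x ∈ F x)
    (hS : S ⊆ A) (hSF : levelCode A S F ⊆ A) : decodedSet A (levelCode A S F) = S :=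
  Set.ext fun _ =>
    ⟨fun ⟨_, h⟩ => (pair_self_mem_levelCode_iff hF).1 ((codesPair_iff_pair_mem hA hSF _ _).1 h),
      fun hx => ⟨hS hx, (codesPair_iff_pair_mem hA hSF _ _).2
        ((pair_self_mem_levelCode_iff hF).2 hx)⟩⟩

theorem isLevelOver_levelCode_iff (hA : ∀ a ∈ A, ∀ b ∈ a, b ∈ A) (hF : ∀ x, x ∈ F x)
    (hSF : levelCode A S F ⊆ A) {u x : A} :
    (ZModel A (levelCode A S F)).IsLevelOver u x ↔ u.1 = F x.1 := by
  constructor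
  · rintro ⟨hxu, h⟩
    exact (pair_mem_levelCode_iff hF x.2 hxu).1 ((codesPair_iff_pair_mem hA hSF _ _).1 h)
  · intro hu
    have hxu : x.1 ∈ u.1 := hu ▸ hF _
    exact ⟨hxu, (codesPair_iff_pair_mem hA hSF _ _).2
      ((pair_mem_levelCode_iff hF x.2 hxu).2 hu)⟩

theorem levelCode_subset_Vrank {o : Ordinal.{0}} (ho : Order.IsSuccLimit o) (hS : S ⊆ Vrank o)
    (hF : ∀ x ∈ Vrank o, F x ∈ Vrank o) : levelCode (Vrank o) S F ⊆ Vrank o := by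
  have hpair {x y : ZFSet} (hx : x ∈ Vrank o) (hy : y ∈ Vrank o) : {x, y} ∈ Vrank o :=
    (ZFSet.rank_pair x y).trans_lt (max_lt (ho.succ_lt hx) (ho.succ_lt hy))
  rintro _ (⟨x, hx, rfl⟩ | ⟨x, hx, rfl⟩)
  exacts [hpair (hS hx) (hS hx), hpair hx (hF x hx)]

theorem hasReflectingLevels_levelCode {o : Ordinal.{0}} {e : Ordinal.{0} → Ordinal.{0}}
    (he : StrictMono e) (hle : ∀ l, l < e l)
    (hwit : ∀ l < o, e l < o ∧ HasWitnessesBelow o S (e l) (e l)) (hS : S ⊆ Vrank o)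
    (hSe : levelCode (Vrank o) S (fun x => ZFSet.vonNeumann (e x.rank)) ⊆ Vrank o) :
    (ZModel (Vrank o) (levelCode (Vrank o) S
      fun x => ZFSet.vonNeumann (e x.rank))).HasReflectingLevels := by
  let T := levelCode (Vrank o) S fun x => ZFSet.vonNeumann (e x.rank)
  have hA : ∀ a ∈ Vrank o, ∀ b ∈ a, b ∈ Vrank o := fun _ ha _ hb => mem_Vrank_of_mem ha hb
  have hF (x : ZFSet) : x ∈ ZFSet.vonNeumann (e x.rank) := ZFSet.mem_vonNeumann.2 (hle _)
  have hlevel {u x : Vrank o} := isLevelOver_levelCode_iff hA hF hSe (u := u) (x := x)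
  refine ⟨fun x => ?_, fun x u z w hu hzu hwz => ?_, fun x y u w hu hw => ?_,
    fun x y u w hu hw hxy => ?_, fun n φ x u hu => ?_⟩
  · refine ⟨⟨ZFSet.vonNeumann (e x.1.rank), ?_⟩, hlevel.2 rfl⟩
    exact (ZFSet.rank_vonNeumann _).trans_lt (hwit _ x.2).1
  · have hut : u.1.IsTransitive := hlevel.1 hu ▸ ZFSet.isTransitive_vonNeumann _
    exact hut.mem_trans hwz hzu
  · have huw : u.1 ∈ w.1 ∨ u.1 = w.1 ∨ w.1 ∈ u.1 := by
      rw [hlevel.1 hu, hlevel.1 hw]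
      simp only [ZFSet.vonNeumann_mem_vonNeumann_iff, ZFSet.vonNeumann_inj]
      exact lt_trichotomy _ _
    exact huw.imp_right (.imp_left Subtype.ext)
  · change u.1 ∈ w.1
    rw [hlevel.1 hu, hlevel.1 hw, ZFSet.vonNeumann_mem_vonNeumann_iff]
    exact he (ZFSet.rank_lt_of_mem hxy)
  · have hmem (a : Vrank o) : a.1 ∈ u.1 ↔ a.1 ∈ Vrank (e x.1.rank) := by
      rw [hlevel.1 hu]
      exact ZFSet.mem_vonNeumann
    have hpred : (ZModel (Vrank o) S).pred = (ZModel (Vrank o) T).decode.pred := by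
      rw [pred_decode_eq, decodedSet_levelCode hA hF hS hSe]
    intro b hb hex
    obtain ⟨a, ha, hφ⟩ := ((hwit _ x.2).2 φ).of_pred_eq hpred b (fun i => (hmem _).1 (hb i)) hex
    exact ⟨a, (hmem a).2 ha, hφ⟩

theorem exists_hasReflectingLevels {κ : Cardinal.{0}} (hκ : κ.IsInaccessible)
    (hS : S ⊆ Vrank κ.ord) : ∃ S' ⊆ Vrank κ.ord, decodedSet (Vrank κ.ord) S' = S ∧
      (ZModel (Vrank κ.ord) S').HasReflectingLevels := by
  obtain ⟨e, he, hle, hwit⟩ := exists_strictMono_hasWitnessesBelow hκ S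
  have hS' := levelCode_subset_Vrank (F := fun x => ZFSet.vonNeumann (e x.rank))
    (Cardinal.isSuccLimit_ord hκ.aleph0_lt.le) hS fun x hx =>
      (ZFSet.rank_vonNeumann _).trans_lt (hwit _ hx).1
  exact ⟨_, hS', decodedSet_levelCode (fun _ hx _ => mem_Vrank_of_mem hx)
    (fun _ => ZFSet.mem_vonNeumann.2 (hle _)) hS hS',
    hasReflectingLevels_levelCode he hle hwit hS hS'⟩

end Coding

/-- If `κ` is unfoldable then, for every `S ⊆ R(κ)` and every
ordinal `α`, the ordering of well-founded end elementary extensions of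
`(R(κ),∈,S)` contains a chain of order type `α`. -/
theorem unfoldable_has_chains_of_every_order_type
    (κ : Cardinal.{0}) (hκ : IsUnfoldable κ)
    (S : Set ZFSet) (hS : S ⊆ Vrank κ.ord) (α : Ordinal.{0}) :
    ∃ (N : ↥(Set.Iio α) → ZFSet) (T : ↥(Set.Iio α) → Set ZFSet),
      (∀ β, (N β).IsTransitive) ∧
      (∀ β, ZEEE (Vrank κ.ord) S (N β).toSet (T β)) ∧
      (∀ β γ, β < γ → ZEEE (N β).toSet (T β) (N γ).toSet (T γ)) := by
  obtain ⟨S', hS', rfl, hL⟩ := exists_hasReflectingLevels hκ.1 hS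
  obtain ⟨N, T, hN, ⟨_, hE⟩, hα⟩ := hκ.2 S' hS' (κ.ord + α)
  have hLN := hL.of_isElem hE.elementary
  obtain ⟨U, hU, hmem⟩ := hLN.exists_level_chain hN hα
  choose x hx hκx using hU
  have htrans (β) : (U β).1.IsTransitive := hLN.isTransitive hN (hx β)
  have helem (β) := hLN.isElem_inclusion (hx β) fun _ ha => hN.mem_trans ha (U β).2
  have hUU {β γ} (h : β < γ) : (U β).1.toSet ⊂ (U γ).1.toSet :=
    Set.ssubset_iff_exists.2
      ⟨fun _ ha => (htrans γ).mem_trans ha (hmem β γ h), _, hmem β γ h, ZFSet.mem_irrefl _⟩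
  refine ⟨fun β => U β, fun _ => decodedSet N.toSet T, htrans, fun β => ?_, fun β γ h => ?_⟩
  · exact ZEEE.of_isElem
      (hLN.Vrank_ssubset_level hL hE.elementary (hx β) (htrans β) (hκx β))
      (fun _ ha _ => mem_Vrank_of_mem ha) ((helem β).of_comp hE.elementary.decode.of_decode)
  · exact ZEEE.of_isElem (hUU h) (fun _ ha _ hb => (htrans β).mem_trans hb ha)
      ((helem γ).of_comp (helem β))
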